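/- arXiv:2509.14585 — 3 statements merged into one kernel-verified Lean document; each statement's English description precedes it below -/
import Mathlib

section
/- The linear span of the set of anisotropic Gaussian functions { s ↦ exp(-(s - m)ᵀ C^{-1} (s - m)) : m ∈ ℝ^D, C a D × D real symmetric positive definite matrix } is dense in L²(ℝ^D) with respect to Lebesgue measure. -/
open MeasureTheory Matrix

/-- The anisotropic Gaussian function `s ↦ exp (-(s - m)ᵀ C⁻¹ (s - m))` on `ℝ^D`. -/
noncomputable def anisotropicGaussian (D : ℕ) (m : Fin D → ℝ)
    (C : Matrix (Fin D) (Fin D) ℝ) : (Fin D → ℝ) → ℝ :=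
  fun s => Real.exp (-((s - m) ⬝ᵥ (C⁻¹ *ᵥ (s - m))))

/-- The set of elements of `L²(ℝ^D)` (w.r.t. Lebesgue measure) represented (a.e.) by an
anisotropic Gaussian `s ↦ exp (-(s - m)ᵀ C⁻¹ (s - m))` with `m ∈ ℝ^D` and `C` a `D × D` real
symmetric positive definite matrix. -/
noncomputable def gaussianSetL2 (D : ℕ) : Set (Lp ℝ 2 (volume : Measure (Fin D → ℝ))) :=
  {f | ∃ (m : Fin D → ℝ) (C : Matrix (Fin D) (Fin D) ℝ),
    C.IsSymm ∧ C.PosDef ∧ (f : (Fin D → ℝ) → ℝ) =ᵐ[volume] anisotropicGaussian D m C}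

/-! A function orthogonal to every translate `anisotropicGaussian D m C` with `C` fixed is zero.
By completing the square, multiplying the centred Gaussian `w` by `exp (L s)` with `L` linear
gives a multiple of a translate of `w`, so if `f` is orthogonal to all translates then the two-sided
Laplace transform of `f * w` vanishes. The positive and negative parts of `f * w` are then densities
of finite measures with the same everywhere finite Laplace transform; by analytic continuation these
measures have the same characteristic function, hence coincide, and `f * w = 0` almost everywhere.
-/

section LaplaceTransform

variable {E : Type*} [NormedAddCommGroup E] [NormedSpace ℝ E] [CompleteSpace E]
  [SecondCountableTopology E] [MeasurableSpace E] [BorelSpace E]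

open ProbabilityTheory in
lemma measure_ext_of_integral_exp_dual {μ ν : Measure E} [IsFiniteMeasure μ] [IsFiniteMeasure ν]
    (hμ : ∀ L : StrongDual ℝ E, Integrable (fun x => Real.exp (L x)) μ)
    (h : ∀ L : StrongDual ℝ E, ∫ x, Real.exp (L x) ∂μ = ∫ x, Real.exp (L x) ∂ν) : μ = ν := by
  apply Measure.ext_of_charFunDual
  funext L
  have hmgf : mgf L μ = mgf L ν := by
    funext t
    simpa [mgf] using h (t • L)
  have hzero : μ = 0 ↔ ν = 0 := by
    have hmass : μ.real Set.univ = ν.real Set.univ := by simpa using h 0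
    rw [← Measure.measure_univ_eq_zero, ← Measure.measure_univ_eq_zero,
      ← measureReal_eq_zero_iff, ← measureReal_eq_zero_iff, hmass]
  have hdomain : integrableExpSet L μ = Set.univ :=
    Set.eq_univ_of_forall fun t => by simpa [integrableExpSet] using hμ (t • L)
  -- Equality of the moment generating functions on `ℝ` extends analytically to the imaginary axis.
  have hcomplex : complexMGF L μ ((1 : ℝ) * Complex.I) = complexMGF L ν ((1 : ℝ) * Complex.I) :=
    eqOn_complexMGF_of_mgf' hmgf hzero (by simp [hdomain])
  rwa [complexMGF_mul_I (by fun_prop), complexMGF_mul_I (by fun_prop),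
    ← charFunDual_eq_charFun_map_one, ← charFunDual_eq_charFun_map_one] at hcomplex

variable {μ : Measure E}

lemma ae_eq_of_integral_mul_exp_dual_eq {f g : E → ℝ} (hf_nonneg : 0 ≤ f) (hg_nonneg : 0 ≤ g)
    (hf : ∀ L : StrongDual ℝ E, Integrable (fun x => f x * Real.exp (L x)) μ)
    (hg : Integrable g μ)
    (h : ∀ L : StrongDual ℝ E,
      ∫ x, f x * Real.exp (L x) ∂μ = ∫ x, g x * Real.exp (L x) ∂μ) : f =ᵐ[μ] g := by
  have hf_int : Integrable f μ := by simpa using hf 0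
  have := isFiniteMeasure_withDensity_ofReal hf_int.2
  have := isFiniteMeasure_withDensity_ofReal hg.2
  have hf_meas := hf_int.aemeasurable.ennreal_ofReal
  have hg_meas := hg.aemeasurable.ennreal_ofReal
  have hdensity : μ.withDensity (fun x => ENNReal.ofReal (f x)) =
      μ.withDensity fun x => ENNReal.ofReal (g x) := by
    refine measure_ext_of_integral_exp_dual (fun L => ?_) fun L => ?_
    · rw [integrable_withDensity_iff_integrable_smul₀' hf_meas (by simp)]
      simpa only [ENNReal.toReal_ofReal (hf_nonneg _), smul_eq_mul] using hf L
    · rw [integral_withDensity_eq_integral_toReal_smul₀ hf_meas (by simp),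
        integral_withDensity_eq_integral_toReal_smul₀ hg_meas (by simp)]
      simpa only [ENNReal.toReal_ofReal (hf_nonneg _), ENNReal.toReal_ofReal (hg_nonneg _),
        smul_eq_mul] using h L
  rw [withDensity_eq_iff hf_meas hg_meas hf_int.lintegral_lt_top.ne] at hdensity
  filter_upwards [hdensity] with x hx
  exact (ENNReal.ofReal_eq_ofReal_iff (hf_nonneg x) (hg_nonneg x)).1 hx

lemma ae_eq_zero_of_integral_mul_exp_dual_eq_zero {g : E → ℝ}
    (hg : ∀ L : StrongDual ℝ E, Integrable (fun x => g x * Real.exp (L x)) μ)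
    (h : ∀ L : StrongDual ℝ E, ∫ x, g x * Real.exp (L x) ∂μ = 0) : g =ᵐ[μ] 0 := by
  have hpos (L : StrongDual ℝ E) : Integrable (fun x => max (g x) 0 * Real.exp (L x)) μ := by
    simpa only [max_mul_of_nonneg _ _ (Real.exp_nonneg _), zero_mul] using (hg L).pos_part
  have hneg (L : StrongDual ℝ E) : Integrable (fun x => max (-g x) 0 * Real.exp (L x)) μ := by
    simpa only [max_mul_of_nonneg _ _ (Real.exp_nonneg _), zero_mul, neg_mul] using
      (hg L).neg_part
  have hparts : (fun x => max (g x) 0) =ᵐ[μ] fun x => max (-g x) 0 := by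
    refine ae_eq_of_integral_mul_exp_dual_eq (fun _ => le_max_right _ _)
      (fun _ => le_max_right _ _) hpos (by simpa using hneg 0) fun L => ?_
    rw [← sub_eq_zero, ← integral_sub (hpos L) (hneg L)]
    simpa only [← sub_mul, max_zero_sub_max_neg_zero_eq_self] using h L
  filter_upwards [hparts] with x hx
  rw [Pi.zero_apply, ← max_zero_sub_max_neg_zero_eq_self (g x)]
  exact sub_eq_zero.2 hx

theorem dense_of_mul_exp_dual_mem {w : E → ℝ} (hw : ∀ᵐ x ∂μ, w x ≠ 0)
    (hw_exp : ∀ L : StrongDual ℝ E, MemLp (fun x => w x * Real.exp (L x)) 2 μ)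
    {S : Submodule ℝ (Lp ℝ 2 μ)} (hS : ∀ L, (hw_exp L).toLp ∈ S) :
    Dense (S : Set (Lp ℝ 2 μ)) := by
  rw [Submodule.dense_iff_topologicalClosure_eq_top, Submodule.topologicalClosure_eq_top_iff,
    Submodule.eq_bot_iff]
  intro f hf
  have hint (L : StrongDual ℝ E) : Integrable (fun x => f x * w x * Real.exp (L x)) μ := by
    simp_rw [mul_assoc]
    exact (Lp.memLp f).integrable_mul (hw_exp L)
  have hzero (L : StrongDual ℝ E) : ∫ x, f x * w x * Real.exp (L x) ∂μ = 0 := by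
    rw [← (Submodule.mem_orthogonal S f).1 hf _ (hS L), L2.inner_def]
    refine integral_congr_ae ?_
    filter_upwards [(hw_exp L).coeFn_toLp] with x hx
    rw [hx, Real.inner_apply, mul_assoc, mul_comm]
  rw [Lp.eq_zero_iff_ae_eq_zero]
  filter_upwards [ae_eq_zero_of_integral_mul_exp_dual_eq_zero hint hzero, hw] with x hx hwx
  exact (mul_eq_zero.1 hx).resolve_right hwx

end LaplaceTransform

lemma integrable_exp_neg_dotProduct_self {ι : Type*} [Fintype ι] :
    Integrable fun s : ι → ℝ => Real.exp (-(s ⬝ᵥ s)) := by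
  simp_rw [dotProduct, ← Finset.sum_neg_distrib, Real.exp_sum, ← sq]
  refine Integrable.fintype_prod (f := fun _ (t : ℝ) => Real.exp (-t ^ 2)) fun _ => ?_
  simpa using integrable_exp_neg_mul_sq one_pos

open scoped MatrixOrder in
lemma integrable_exp_neg_dotProduct_mulVec {ι : Type*} [Fintype ι] {A : Matrix ι ι ℝ}
    (hA : A.PosDef) : Integrable fun s : ι → ℝ => Real.exp (-(s ⬝ᵥ (A *ᵥ s))) := by
  classical
  obtain ⟨B, hB, rfl⟩ := CStarAlgebra.isStrictlyPositive_iff_eq_star_mul_self.1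
    hA.isStrictlyPositive
  have hmap := Real.map_matrix_volume_pi_eq_smul_volume_pi ((isUnit_iff_isUnit_det B).1 hB).ne_zero
  have hcomp : Integrable (fun s : ι → ℝ => Real.exp (-((B *ᵥ s) ⬝ᵥ (B *ᵥ s)))) := by
    refine Integrable.comp_measurable (f := toLin' B)
      (g := fun s : ι → ℝ => Real.exp (-(s ⬝ᵥ s))) ?_
      (LinearMap.continuous_of_finiteDimensional _).measurable
    rw [hmap]
    exact integrable_exp_neg_dotProduct_self.smul_measure ENNReal.ofReal_ne_top
  refine hcomp.congr (ae_of_all _ fun s => ?_)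
  simp [star_eq_conjTranspose, ← mulVec_mulVec, dotProduct_mulVec, vecMul_transpose]

lemma exists_dotProduct_eq_of_strongDual {ι : Type*} [Fintype ι] (L : StrongDual ℝ (ι → ℝ)) :
    ∃ v : ι → ℝ, ∀ s, L s = v ⬝ᵥ s := by
  classical
  exact ⟨(dotProductEquiv ℝ ι).symm L, fun s =>
    (LinearMap.congr_fun ((dotProductEquiv ℝ ι).apply_symm_apply (L : (ι → ℝ) →ₗ[ℝ] ℝ)) s).symm⟩

section Gaussian

variable {D : ℕ} {C : Matrix (Fin D) (Fin D) ℝ}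

lemma memLp_anisotropicGaussian (hC : C.PosDef) (m : Fin D → ℝ) :
    MemLp (anisotropicGaussian D m C) 2 := by
  have hcont : Continuous (anisotropicGaussian D m C) := by
    unfold anisotropicGaussian
    fun_prop
  rw [memLp_two_iff_integrable_sq hcont.aestronglyMeasurable]
  have hquad := integrable_exp_neg_dotProduct_mulVec (hC.inv.smul (two_pos (α := ℝ)))
  refine (hquad.comp_sub_right m).congr (ae_of_all _ fun s => ?_)
  simp only [anisotropicGaussian, ← Real.exp_nat_mul, smul_mulVec, dotProduct_smul, smul_eq_mul,
    Nat.cast_ofNat, mul_neg]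

lemma anisotropicGaussian_zero_mul_exp (hC : C.IsSymm) (hdet : IsUnit C.det) (v s : Fin D → ℝ) :
    anisotropicGaussian D 0 C s * Real.exp (v ⬝ᵥ s) =
      Real.exp ((1 / 4) * (v ⬝ᵥ (C *ᵥ v))) *
        anisotropicGaussian D ((1 / 2 : ℝ) • (C *ᵥ v)) C s := by
  have hinv : C⁻¹ *ᵥ (C *ᵥ v) = v := by
    rw [mulVec_mulVec, nonsing_inv_mul C hdet, one_mulVec]
  have hcross : (C *ᵥ v) ⬝ᵥ (C⁻¹ *ᵥ s) = v ⬝ᵥ s := by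
    rw [dotProduct_mulVec, ← mulVec_transpose, transpose_nonsing_inv, hC.eq, hinv]
  have hsquare : (s - (1 / 2 : ℝ) • (C *ᵥ v)) ⬝ᵥ (C⁻¹ *ᵥ (s - (1 / 2 : ℝ) • (C *ᵥ v))) =
      s ⬝ᵥ (C⁻¹ *ᵥ s) - v ⬝ᵥ s + (1 / 4) * (v ⬝ᵥ (C *ᵥ v)) := by
    simp only [mulVec_sub, mulVec_smul, hinv, sub_dotProduct, dotProduct_sub, smul_dotProduct,
      dotProduct_smul, smul_eq_mul, hcross, dotProduct_comm s v, dotProduct_comm (C *ᵥ v) v]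
    ring
  simp only [anisotropicGaussian, sub_zero, hsquare, ← Real.exp_add]
  ring_nf

lemma exists_anisotropicGaussian_zero_mul_exp_eq_smul (hC : C.IsSymm) (hdet : IsUnit C.det)
    (L : StrongDual ℝ (Fin D → ℝ)) : ∃ (c : ℝ) (m : Fin D → ℝ),
      (fun s => anisotropicGaussian D 0 C s * Real.exp (L s)) = c • anisotropicGaussian D m C := by
  obtain ⟨v, hv⟩ := exists_dotProduct_eq_of_strongDual L
  simp_rw [hv]
  exact ⟨_, _, funext (anisotropicGaussian_zero_mul_exp hC hdet v)⟩

theorem dense_span_anisotropicGaussian_general (hC : C.PosDef) :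
    Dense (Submodule.span ℝ (Set.range fun m => (memLp_anisotropicGaussian hC m).toLp) :
      Set (Lp ℝ 2 (volume : Measure (Fin D → ℝ)))) := by
  choose c m htilt using
    exists_anisotropicGaussian_zero_mul_exp_eq_smul (isHermitian_iff_isSymm.1 hC.isHermitian)
      hC.det_pos.ne'.isUnit
  have hmem (L : StrongDual ℝ (Fin D → ℝ)) :
      MemLp (fun s => anisotropicGaussian D 0 C s * Real.exp (L s)) 2 := by
    rw [htilt L]
    exact (memLp_anisotropicGaussian hC (m L)).const_smul (c L)
  refine dense_of_mul_exp_dual_mem (w := anisotropicGaussian D 0 C)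
    (ae_of_all _ fun s => (Real.exp_pos _).ne') hmem fun L => ?_
  have htoLp : (hmem L).toLp = c L • (memLp_anisotropicGaussian hC (m L)).toLp := by
    simp_rw [htilt L]
    rfl
  rw [htoLp]
  exact Submodule.smul_mem _ (c L) (Submodule.subset_span ⟨m L, rfl⟩)

end Gaussian

/-- The linear span of the anisotropic Gaussian functions is dense in `L²(ℝ^D)` with respect
to Lebesgue measure. -/
theorem dense_span_anisotropicGaussian (D : ℕ) (hD : 0 < D) :
    Dense ((Submodule.span ℝ (gaussianSetL2 D) : Submodule ℝ
      (Lp ℝ 2 (volume : Measure (Fin D → ℝ)))) : Set (Lp ℝ 2 (volume : Measure (Fin D → ℝ)))) := by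
  refine (dense_span_anisotropicGaussian_general PosDef.one).mono (Submodule.span_mono ?_)
  rintro _ ⟨m, rfl⟩
  exact ⟨m, 1, isSymm_one, PosDef.one, MemLp.coeFn_toLp _⟩
end

section
/- Fix k₀ ∈ {1,…,K} and set G := (2/T) Σ_{t=1}^{T} δ_t · ξ_{k₀}(a_t) · 𝒢_{k₀}(s_t) · (s_t - m_{k₀})(s_t - m_{k₀})ᵀ, which is a D_s × D_s real symmetric matrix. Then for every D_s × D_s real symmetric matrix X, the function C ↦ L(Ω(C)), obtained from the empirical loss L by replacing C_{k₀} with the matrix variable C while keeping all other parameters fixed, has directional derivative at C = C_{k₀} in direction X equal to trace(C_{k₀}^{-1} G C_{k₀}^{-1} X); that is, G is the Riemannian gradient of L with respect to C_{k₀} under the affine-invariant metric ⟨X, Y⟩_C := trace(C^{-1} X C^{-1} Y) on the manifold of symmetric positive definite matrices. -/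
open Matrix Finset

/-!
Only the `k₀`-th summand of `Q_Ω` depends on `C_{k₀}`, and differentiating it along a curve with
velocity `X` through `C_{k₀}` uses `d(C⁻¹) = -C⁻¹ X C⁻¹`. For `v = s - m_{k₀}` this gives
`d(-vᵀ C⁻¹ v) = vᵀ C⁻¹ X C⁻¹ v = tr (C⁻¹ (v vᵀ) C⁻¹ X) = ⟨v vᵀ, X⟩_C`, so the affine-invariant
metric appears by itself and `v vᵀ` is the gradient of the exponent. The chain rule through `exp`
and the squared residuals only multiplies it by scalars.
-/

theorem hasDerivAt_sum_mul_sub_sq {𝕜 ι : Type*} [NontriviallyNormedField 𝕜] [Fintype ι]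
    {f : ι → 𝕜 → 𝕜} {f' : ι → 𝕜} {t : 𝕜} (w y : ι → 𝕜)
    (hf : ∀ i, HasDerivAt (f i) (f' i) t) :
    HasDerivAt (fun τ => ∑ i, w i * (f i τ - y i) ^ 2)
      (∑ i, 2 * w i * (f i t - y i) * f' i) t := by
  refine .fun_sum fun i _ => ((((hf i).sub_const (y i)).fun_pow 2).const_mul (w i)).congr_deriv ?_
  push_cast
  ring

theorem hasDerivAt_add_smul_const {𝕜 E : Type*} [NontriviallyNormedField 𝕜] [AddCommGroup E]
    [Module 𝕜 E] [TopologicalSpace E] [ContinuousSMul 𝕜 E] (b x : E) (t : 𝕜) :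
    HasDerivAt (fun τ : 𝕜 => b + τ • x) x t :=
  .of_isLittleOTVS <| (Asymptotics.IsLittleOTVS.zero _ _).congr_left <| by simp [← sub_smul]

section MatrixCurves

variable {𝕜 m n : Type*} [NontriviallyNormedField 𝕜] [Fintype m] [Fintype n]

theorem hasDerivAt_dotProduct_mulVec {M : 𝕜 → Matrix m n 𝕜} {M' : Matrix m n 𝕜} {t : 𝕜}
    (hM : HasDerivAt M M' t) (v : m → 𝕜) (w : n → 𝕜) :
    HasDerivAt (fun τ => v ⬝ᵥ (M τ *ᵥ w)) (v ⬝ᵥ (M' *ᵥ w)) t := by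
  have hentry (i j) : HasDerivAt (fun τ => M τ i j) (M' i j) t :=
    hasDerivAt_pi.1 (hasDerivAt_pi.1 hM i) j
  exact .fun_sum fun i _ => .const_mul (v i) (.fun_sum fun j _ => (hentry i j).mul_const (w j))

variable [CompleteSpace 𝕜] [DecidableEq n] {A : 𝕜 → Matrix n n 𝕜} {A' : Matrix n n 𝕜} {t : 𝕜}

section

attribute [local instance] Matrix.linftyOpNormedRing Matrix.linftyOpNormedAlgebra

theorem hasDerivAt_matrix_inv (hA : HasDerivAt A A' t) (hAt : IsUnit (A t)) :
    HasDerivAt (fun τ => (A τ)⁻¹) (-((A t)⁻¹ * A' * (A t)⁻¹)) t := by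
  -- The uniformity of the operator norm is the entrywise one, but not reducibly so.
  have : HasSummableGeomSeries (Matrix n n 𝕜) :=
    @instHasSummableGeomSeriesOfCompleteSpace _ _ (inferInstance : CompleteSpace (Matrix n n 𝕜))
  obtain ⟨u, hu⟩ := hAt
  have hinv := (hasFDerivAt_ringInverse (𝕜 := 𝕜) u).comp_hasDerivAt_of_eq t hA hu
  refine (hinv.congr_deriv ?_).congr_of_eventuallyEq ?_
  · simp [← hu]
  · simp [Function.comp_def, nonsing_inv_eq_ringInverse]

end

theorem hasDerivAt_dotProduct_inv_mulVec (hA : HasDerivAt A A' t) (hAt : IsUnit (A t))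
    (v w : n → 𝕜) :
    HasDerivAt (fun τ => v ⬝ᵥ ((A τ)⁻¹ *ᵥ w))
      (-(v ⬝ᵥ (((A t)⁻¹ * A' * (A t)⁻¹) *ᵥ w))) t := by
  simpa [neg_mulVec] using hasDerivAt_dotProduct_mulVec (hasDerivAt_matrix_inv hA hAt) v w

end MatrixCurves

section AffineInvariantMetric

variable {R n ι : Type*} [CommRing R] [Fintype n] [DecidableEq n] [Fintype ι]

/-- The affine-invariant inner product `⟨X, Y⟩_C = tr (C⁻¹ X C⁻¹ Y)` of two tangent vectors at `C`,
written for arbitrary square matrices. -/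
noncomputable def affineInvariantInner (C X Y : Matrix n n R) : R :=
  (C⁻¹ * X * C⁻¹ * Y).trace

theorem affineInvariantInner_sum_smul_left (C : Matrix n n R) (c : ι → R)
    (X : ι → Matrix n n R) (Y : Matrix n n R) :
    affineInvariantInner C (∑ i, c i • X i) Y = ∑ i, c i * affineInvariantInner C (X i) Y := by
  simp [affineInvariantInner, Matrix.mul_sum, Matrix.sum_mul, trace_sum]

theorem affineInvariantInner_vecMulVec (C : Matrix n n R) (v w : n → R) (Y : Matrix n n R) :
    affineInvariantInner C (vecMulVec v w) Y = w ⬝ᵥ ((C⁻¹ * Y * C⁻¹) *ᵥ v) := by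
  rw [affineInvariantInner, Matrix.mul_assoc, Matrix.mul_assoc, trace_mul_comm, Matrix.mul_assoc,
    vecMulVec_mul, trace_vecMulVec, dotProduct_comm, ← dotProduct_mulVec]

end AffineInvariantMetric

section GaussianMixture

variable {n κ 𝔄 ι : Type*} [Fintype n] [DecidableEq n]

/-- The unnormalised Gaussian `x ↦ exp (-(x - c)ᵀ C⁻¹ (x - c))` with centre `c` and
covariance `C`. -/
noncomputable def gaussianBump (c : n → ℝ) (C : Matrix n n ℝ) (x : n → ℝ) : ℝ :=
  Real.exp (-((x - c) ⬝ᵥ (C⁻¹ *ᵥ (x - c))))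

theorem hasDerivAt_gaussianBump {A : ℝ → Matrix n n ℝ} {A' : Matrix n n ℝ} {t : ℝ}
    (hA : HasDerivAt A A' t) (hAt : IsUnit (A t)) (c x : n → ℝ) :
    HasDerivAt (fun τ => gaussianBump c (A τ) x)
      (gaussianBump c (A t) x *
        affineInvariantInner (A t) (vecMulVec (x - c) (x - c)) A') t := by
  simpa only [gaussianBump, affineInvariantInner_vecMulVec, neg_neg] using
    (hasDerivAt_dotProduct_inv_mulVec hA hAt (x - c) (x - c)).fun_neg.exp

variable [Fintype κ]

/-- The Gaussian-mixture Q-function `Q(x, b) = ∑ k, ξ_k(b) 𝒢_k(x)`, with arbitrary mixing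
weights `ξ` in place of the products `∏ j, υ_{k,j}`. -/
noncomputable def gaussianMixtureQ (ξ : κ → 𝔄 → ℝ) (m : κ → n → ℝ) (C : κ → Matrix n n ℝ)
    (x : n → ℝ) (b : 𝔄) : ℝ :=
  ∑ k, ξ k b * gaussianBump (m k) (C k) x

theorem gaussianMixtureQ_update [DecidableEq κ] (ξ : κ → 𝔄 → ℝ) (m : κ → n → ℝ)
    (C : κ → Matrix n n ℝ) (k₀ : κ) (B : Matrix n n ℝ) (x : n → ℝ) (b : 𝔄) :
    gaussianMixtureQ ξ m (Function.update C k₀ B) x b =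
      ∑ k, ξ k b *
        if k = k₀ then gaussianBump (m k₀) B x else gaussianBump (m k) (C k) x := by
  refine sum_congr rfl fun k _ => ?_
  rcases eq_or_ne k k₀ with rfl | hk
  · simp only [Function.update_self, if_true]
  · simp only [Function.update_of_ne hk, if_neg hk]

variable [Fintype ι]

/-- The weighted squared error of the mixture Q-function on samples `(s i, a i)` with targets
`y i`. The empirical loss has `w i = 1 / T` and `y i = r i + α q i`. -/
noncomputable def weightedSquaredLoss (w : ι → ℝ) (s : ι → n → ℝ) (a : ι → 𝔄) (y : ι → ℝ)
    (ξ : κ → 𝔄 → ℝ) (m : κ → n → ℝ) (C : κ → Matrix n n ℝ) : ℝ :=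
  ∑ i, w i * (gaussianMixtureQ ξ m C (s i) (a i) - y i) ^ 2

/-- The affine-invariant gradient of `weightedSquaredLoss` with respect to the covariance `C k₀`;
the matrix `G` when `w i = 1 / T`. -/
noncomputable def covarianceGradient (w : ι → ℝ) (s : ι → n → ℝ) (a : ι → 𝔄) (y : ι → ℝ)
    (ξ : κ → 𝔄 → ℝ) (m : κ → n → ℝ) (C : κ → Matrix n n ℝ) (k₀ : κ) : Matrix n n ℝ :=
  ∑ i, (2 * w i * ((gaussianMixtureQ ξ m C (s i) (a i) - y i) * ξ k₀ (a i) *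
    gaussianBump (m k₀) (C k₀) (s i))) • vecMulVec (s i - m k₀) (s i - m k₀)

theorem isSymm_covarianceGradient (w : ι → ℝ) (s : ι → n → ℝ) (a : ι → 𝔄) (y : ι → ℝ)
    (ξ : κ → 𝔄 → ℝ) (m : κ → n → ℝ) (C : κ → Matrix n n ℝ) (k₀ : κ) :
    (covarianceGradient w s a y ξ m C k₀).IsSymm := by
  simp [Matrix.IsSymm, covarianceGradient, transpose_sum]

variable [DecidableEq κ] {C : κ → Matrix n n ℝ} {k₀ : κ} {A : ℝ → Matrix n n ℝ}
  {A' : Matrix n n ℝ} {t : ℝ}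

theorem hasDerivAt_gaussianMixtureQ_update (hC : IsUnit (C k₀)) (hA : HasDerivAt A A' t)
    (hAt : A t = C k₀) (ξ : κ → 𝔄 → ℝ) (m : κ → n → ℝ) (x : n → ℝ) (b : 𝔄) :
    HasDerivAt (fun τ => gaussianMixtureQ ξ m (Function.update C k₀ (A τ)) x b)
      (ξ k₀ b * gaussianBump (m k₀) (C k₀) x *
        affineInvariantInner (C k₀) (vecMulVec (x - m k₀) (x - m k₀)) A') t := by
  have hbump := hasDerivAt_gaussianBump hA (hAt ▸ hC) (m k₀) x
  have hsplit (τ : ℝ) : gaussianMixtureQ ξ m (Function.update C k₀ (A τ)) x b =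
      ξ k₀ b * gaussianBump (m k₀) (A τ) x +
        ∑ k ∈ univ.erase k₀, ξ k b * gaussianBump (m k) (C k) x := by
    rw [gaussianMixtureQ_update, ← add_sum_erase univ _ (mem_univ k₀), if_pos rfl]
    exact congrArg _ (sum_congr rfl fun k hk => by rw [if_neg (ne_of_mem_erase hk)])
  simpa only [hsplit, hAt, mul_assoc] using (hbump.const_mul (ξ k₀ b)).add_const _

theorem riemannianGradient_empiricalLoss_covariance_general (hC : IsUnit (C k₀)) (w : ι → ℝ)
    (s : ι → n → ℝ) (a : ι → 𝔄) (y : ι → ℝ) (ξ : κ → 𝔄 → ℝ) (m : κ → n → ℝ) :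
    (covarianceGradient w s a y ξ m C k₀).IsSymm ∧
    ∀ (A : ℝ → Matrix n n ℝ) (X : Matrix n n ℝ) (t : ℝ), HasDerivAt A X t → A t = C k₀ →
      HasDerivAt (fun τ => weightedSquaredLoss w s a y ξ m (Function.update C k₀ (A τ)))
        (affineInvariantInner (C k₀) (covarianceGradient w s a y ξ m C k₀) X) t := by
  refine ⟨isSymm_covarianceGradient w s a y ξ m C k₀, fun A X t hA hAt => ?_⟩
  have hloss := hasDerivAt_sum_mul_sub_sq w y fun i =>
    hasDerivAt_gaussianMixtureQ_update hC hA hAt ξ m (s i) (a i)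
  simpa only [weightedSquaredLoss, covarianceGradient, affineInvariantInner_sum_smul_left, hAt,
    Function.update_eq_self, mul_assoc] using hloss

end GaussianMixture

/-- Riemannian gradient of the empirical loss with respect to the covariance `C_{k₀}` under
the affine-invariant metric: with
`G := (2/T) ∑_t δ_t ξ_{k₀}(a_t) 𝒢_{k₀}(s_t) (s_t - m_{k₀})(s_t - m_{k₀})ᵀ`,
`G` is symmetric and, for every symmetric direction `X`, the map `C ↦ L(Ω(C))` (replacing
`C_{k₀}` by `C`, all other parameters fixed) has directional derivative at `C = C_{k₀}` in
direction `X` equal to `trace (C_{k₀}⁻¹ G C_{k₀}⁻¹ X) = ⟨G, X⟩_{C_{k₀}}`. -/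
theorem riemannianGradient_empiricalLoss_covariance
    (D K J T : ℕ) (hD : 0 < D) (hK : 0 < K) (hJ : 0 < J) (hT : 0 < T)
    (𝔄 : Type) [Fintype 𝔄] [Nonempty 𝔄] [DecidableEq 𝔄]
    (α : ℝ) (hα : 0 ≤ α ∧ α < 1)
    (s : Fin T → Fin D → ℝ) (a : Fin T → 𝔄) (r q : Fin T → ℝ)
    (υ : Fin K → Fin J → 𝔄 → ℝ) (m : Fin K → Fin D → ℝ)
    (C : Fin K → Matrix (Fin D) (Fin D) ℝ)
    (hC : ∀ k, (C k).IsSymm ∧ (C k).PosDef)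
    -- the Gaussian components 𝒢_k, the weights ξ_k and the Bellman residuals δ_t
    (𝒢 : Fin K → (Fin D → ℝ) → ℝ)
    (h𝒢 : ∀ k x, 𝒢 k x = Real.exp (-((x - m k) ⬝ᵥ ((C k)⁻¹ *ᵥ (x - m k)))))
    (ξ : Fin K → 𝔄 → ℝ) (hξ : ∀ k b, ξ k b = ∏ j, υ k j b)
    (δ : Fin T → ℝ)
    (hδ : ∀ t, δ t = (∑ k, ξ k (a t) * 𝒢 k (s t)) - r t - α * q t)
    (k₀ : Fin K)
    -- the candidate Riemannian gradient G
    (G : Matrix (Fin D) (Fin D) ℝ)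
    (hG : G = (2 / (T : ℝ)) • ∑ t,
      (δ t * ξ k₀ (a t) * 𝒢 k₀ (s t)) • vecMulVec (s t - m k₀) (s t - m k₀)) :
    G.IsSymm ∧
    ∀ X : Matrix (Fin D) (Fin D) ℝ, X.IsSymm →
      HasDerivAt
        (fun τ : ℝ => (1 / (T : ℝ)) * ∑ t,
          ((∑ k, ξ k (a t) *
              (if k = k₀ then
                Real.exp (-((s t - m k₀) ⬝ᵥ ((C k₀ + τ • X)⁻¹ *ᵥ (s t - m k₀))))
              else 𝒢 k (s t)))
            - r t - α * q t) ^ 2)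
        (((C k₀)⁻¹ * G * (C k₀)⁻¹ * X).trace) 0 := by
  obtain rfl : 𝒢 = fun k => gaussianBump (m k) (C k) := funext₂ h𝒢
  obtain rfl := funext hδ
  let w : Fin T → ℝ := fun _ => 1 / (T : ℝ)
  let y : Fin T → ℝ := fun t => r t + α * q t
  have hgrad : G = covarianceGradient w s a y ξ m C k₀ := by
    simp only [hG, covarianceGradient, gaussianMixtureQ, smul_sum, smul_smul, sub_sub, mul_one_div,
      w, y]
  obtain ⟨hsymm, hderiv⟩ := hgrad ▸
    riemannianGradient_empiricalLoss_covariance_general (hC k₀).2.isUnit w s a y ξ m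
  refine ⟨hsymm, fun X _ => ?_⟩
  simpa only [weightedSquaredLoss, gaussianMixtureQ_update, gaussianBump, affineInvariantInner,
    ← mul_sum, ← sub_sub, w, y] using
    hderiv _ X 0 (hasDerivAt_add_smul_const (C k₀) X 0) (by simp)
end

section
/- Let J ∈ ℕ_* and x ∈ ℝ. Then the infimum of Σ_{j=1}^{J} u_j² over all (u_1, …, u_J) ∈ ℝ^J satisfying Π_{j=1}^{J} u_j = x equals J · |x|^{2/J}, and this infimum is attained. -/
open Finset

/-!
The AM-GM inequality for the numbers `‖u i‖ ^ p` gives the lower bound, because the norm is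
multiplicative. Its equality case dictates the minimizer: all `n` factors have norm `‖x‖ ^ (1 / n)`,
and a single one of them carries the phase `x / ‖x‖`.
-/

open scoped NNReal

section LowerBound

variable {ι : Type*} (s : Finset ι)

theorem card_mul_prod_rpow_inv_card_le_sum {z : ι → ℝ} (hz : ∀ i ∈ s, 0 ≤ z i) :
    #s * (∏ i ∈ s, z i) ^ (#s : ℝ)⁻¹ ≤ ∑ i ∈ s, z i := by
  obtain rfl | hs := s.eq_empty_or_nonempty
  · simp
  have hcard : (0 : ℝ) < #s := by exact_mod_cast hs.card_pos
  have amgm : (∏ i ∈ s, z i) ^ (#s : ℝ)⁻¹ ≤ (∑ i ∈ s, z i) / #s := by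
    simpa using Real.geom_mean_le_arith_mean s 1 z (by simp) (by simpa using hs) hz
  exact (le_div_iff₀' hcard).mp amgm

theorem card_mul_norm_prod_rpow_le_sum_norm_rpow {R : Type*} [SeminormedCommRing R] [NormMulClass R]
    [NormOneClass R] (u : ι → R) (p : ℝ) :
    #s * ‖∏ i ∈ s, u i‖ ^ (p / #s) ≤ ∑ i ∈ s, ‖u i‖ ^ p := by
  calc #s * ‖∏ i ∈ s, u i‖ ^ (p / #s)
      = #s * (∏ i ∈ s, ‖u i‖ ^ p) ^ (#s : ℝ)⁻¹ := by
        rw [Real.finsetProd_rpow s _ fun i _ ↦ norm_nonneg (u i), ← norm_prod,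
          ← Real.rpow_mul (norm_nonneg _), div_eq_mul_inv]
    _ ≤ ∑ i ∈ s, ‖u i‖ ^ p :=
        card_mul_prod_rpow_inv_card_le_sum s fun i _ ↦ Real.rpow_nonneg (norm_nonneg (u i)) p

end LowerBound

section Minimizer

variable {ι 𝕜 : Type*} [NormedField 𝕜] [NormedAlgebra ℝ 𝕜]

theorem exists_prod_eq_and_forall_norm_eq_rpow_inv_card {s : Finset ι} (hs : s.Nonempty) (x : 𝕜) :
    ∃ u : ι → 𝕜, ∏ i ∈ s, u i = x ∧ ∀ i, ‖u i‖ = ‖x‖ ^ (#s : ℝ)⁻¹ := by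
  classical
  have hcard : #s ≠ 0 := hs.card_pos.ne'
  obtain rfl | hx := eq_or_ne x 0
  · exact ⟨0, by simp [hcard], by simp [hcard]⟩
  obtain ⟨i₀, hi₀⟩ := hs
  set r : ℝ := ‖x‖ ^ (#s : ℝ)⁻¹
  have r_nonneg : 0 ≤ r := by positivity
  have r_pow : r ^ #s = ‖x‖ := Real.rpow_inv_natCast_pow (norm_nonneg x) hcard
  let phase : ι → 𝕜 := Pi.mulSingle i₀ (‖x‖⁻¹ • x)
  have prod_phase : ∏ i ∈ s, phase i = ‖x‖⁻¹ • x := by simp [phase, hi₀]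
  have norm_phase (i : ι) : ‖phase i‖ = 1 := by
    obtain rfl | hi := eq_or_ne i i₀
    · simp [phase, norm_smul, hx]
    · simp [phase, hi]
  refine ⟨fun i ↦ r • phase i, ?_, fun i ↦ ?_⟩
  · rw [prod_smul, prod_const, r_pow, prod_phase, smul_inv_smul₀ (norm_ne_zero_iff.mpr hx)]
  · rw [norm_smul, norm_phase, mul_one, Real.norm_of_nonneg r_nonneg]

theorem isLeast_hadamard_factorization_sq_sum_general [Fintype ι] [Nonempty ι] (x : 𝕜) (p : ℝ≥0) :
    IsLeast {y : ℝ | ∃ u : ι → 𝕜, ∏ i, u i = x ∧ y = ∑ i, ‖u i‖ ^ (p : ℝ)}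
      (Fintype.card ι * ‖x‖ ^ ((p : ℝ) / Fintype.card ι)) := by
  constructor
  · obtain ⟨u, u_prod, u_norm⟩ :=
      exists_prod_eq_and_forall_norm_eq_rpow_inv_card (univ_nonempty (α := ι)) x
    refine ⟨u, u_prod, ?_⟩
    simp only [u_norm, sum_const, card_univ, nsmul_eq_mul]
    rw [← Real.rpow_mul (norm_nonneg x), inv_mul_eq_div]
  · rintro _ ⟨u, rfl, rfl⟩
    exact card_mul_norm_prod_rpow_le_sum_norm_rpow univ u p

end Minimizer

/-- For `J ∈ ℕ_*` and `x ∈ ℝ`, the infimum of `∑_{j=1}^J u_j²` over all Hadamard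
factorizations `(u_1, …, u_J)` of `x` (i.e. `∏_j u_j = x`) equals `J · |x|^{2/J}`,
and the infimum is attained. -/
theorem isLeast_hadamard_factorization_sq_sum (J : ℕ) (hJ : 0 < J) (x : ℝ) :
    IsLeast {y : ℝ | ∃ u : Fin J → ℝ, (∏ j, u j) = x ∧ y = ∑ j, (u j) ^ 2}
      ((J : ℝ) * |x| ^ ((2 : ℝ) / (J : ℝ))) := by
  have : NeZero J := ⟨hJ.ne'⟩
  simpa using isLeast_hadamard_factorization_sq_sum_general (ι := Fin J) x 2
end
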